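/- The Fock representation of the infinite Heisenberg algebra on Λ is irreducible: if W ⊆ Λ is a ℚ-linear subspace that is stable under multiplication by p_k for every k ≥ 1 and stable under the partial derivative ∂/∂p_k for every k ≥ 1, then W = {0} or W = Λ. -/

import Mathlib

open MvPolynomial Finset

noncomputable section

/-- The ring `Λ = ℚ[p₁, p₂, …]` of symmetric functions, as a polynomial ring in the
power sums `p_r`, `r ≥ 1`. -/
abbrev Λ : Type := MvPolynomial {r : ℕ // 1 ≤ r} ℚ

/-- The power sum `p_m` for `m ≥ 1` (and junk value `0` otherwise). -/
def Xp (m : ℕ) : Λ :=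
  if h : 1 ≤ m then MvPolynomial.X (⟨m, h⟩ : {r : ℕ // 1 ≤ r}) else 0

/-- The formal partial derivative `∂/∂p_m` for `m ≥ 1` (and junk value `0` otherwise). -/
def Dp (m : ℕ) : Λ →ₗ[ℚ] Λ :=
  if h : 1 ≤ m then (MvPolynomial.pderiv (⟨m, h⟩ : {r : ℕ // 1 ≤ r})).toLinearMap else 0

/-- The composite `∂/∂p_{v 0} ∘ ⋯ ∘ ∂/∂p_{v (k-1)}`. -/
def iterD {k : ℕ} (v : Fin k → ℕ) : Λ →ₗ[ℚ] Λ :=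
  (List.ofFn fun i => Dp (v i)).foldr (· ∘ₗ ·) LinearMap.id

theorem fock_aux (W : Submodule ℚ Λ)
    (hder : ∀ i : {r : ℕ // 1 ≤ r}, ∀ f ∈ W, pderiv i f ∈ W) :
    ∀ (n : ℕ) (f : Λ), f.totalDegree ≤ n → f ∈ W → f ≠ 0 → (1 : Λ) ∈ W := by
  have key : ∀ f : Λ, f.totalDegree = 0 → f ∈ W → f ≠ 0 → (1 : Λ) ∈ W := by
    intro f h0 hf hne
    rw [totalDegree_eq_zero_iff_eq_C] at h0
    have hc : coeff 0 f ≠ 0 := by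
      intro h
      rw [h, C_0] at h0
      exact hne h0
    have h1 := W.smul_mem (coeff 0 f)⁻¹ hf
    rw [h0, coeff_C, if_pos rfl, smul_eq_C_mul, ← C_mul, inv_mul_cancel₀ hc, C_1] at h1
    exact h1
  intro n
  induction n with
  | zero => exact fun f h => key f (by omega)
  | succ n ih =>
    intro f hn hf hne
    by_cases h0 : f.totalDegree = 0
    · exact key f h0 hf hne
    have hex : ∃ m ∈ f.support, ∃ i, m i ≠ 0 := by
      by_contra! h
      apply h0
      rw [totalDegree_eq_zero_iff]
      exact h
    obtain ⟨m, hm, i, hi⟩ := hex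
    refine ih (pderiv i f) ?_ (hder i f hf) ?_
    · refine Finset.sup_le fun s hs => ?_
      rw [mem_support_iff, coeff_pderiv] at hs
      have hs' := le_totalDegree (mem_support_iff.mpr (left_ne_zero_of_mul hs))
      rw [Finsupp.sum_add_index' (fun _ => rfl) (fun _ _ _ => rfl),
        Finsupp.sum_single_index rfl] at hs'
      omega
    · intro h
      have h2 := coeff_pderiv (i := i) f (m - Finsupp.single i 1)
      have h3 : m - Finsupp.single i 1 + Finsupp.single i 1 = m :=
        tsub_add_cancel_of_le (by simpa using Nat.one_le_iff_ne_zero.mpr hi)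
      rw [h, h3, coeff_zero] at h2
      rw [mem_support_iff] at hm
      rcases mul_eq_zero.mp h2.symm with h4 | h4
      · exact hm h4
      · exact Nat.cast_add_one_ne_zero _ h4

/-- The Fock representation of the infinite Heisenberg algebra on `Λ` is irreducible:
a subspace stable under multiplication by every `p_k` and under every `∂/∂p_k` is `{0}`
or all of `Λ`. -/
theorem fock_irreducible (W : Submodule ℚ Λ)
    (hmul : ∀ k : ℕ, 1 ≤ k → ∀ f ∈ W, Xp k * f ∈ W)
    (hder : ∀ k : ℕ, 1 ≤ k → ∀ f ∈ W, Dp k f ∈ W) :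
    W = ⊥ ∨ W = ⊤ := by
  have hX : ∀ i : {r : ℕ // 1 ≤ r}, ∀ f ∈ W, f * X i ∈ W := by
    intro i f hf
    have := hmul i.1 i.2 f hf
    rw [mul_comm]
    simpa [Xp, i.2] using this
  have hD : ∀ i : {r : ℕ // 1 ≤ r}, ∀ f ∈ W, pderiv i f ∈ W := by
    intro i f hf
    have := hder i.1 i.2 f hf
    simpa [Dp, i.2] using this
  by_cases hW : W = ⊥
  · exact Or.inl hW
  right
  obtain ⟨f, hf, hne⟩ := W.ne_bot_iff.mp hW
  have h1 := fock_aux W hD _ f le_rfl hf hne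
  rw [eq_top_iff]
  intro g _
  induction g using MvPolynomial.induction_on with
  | C a =>
    have := W.smul_mem a h1
    rwa [smul_eq_C_mul, mul_one] at this
  | add p q hp hq => exact W.add_mem (hp trivial) (hq trivial)
  | mul_X p i hp => exact hX i p (hp trivial)
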